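/- arXiv:2005.05047 — 6 statements merged into one kernel-verified Lean document; each statement's English description precedes it below -/
import Mathlib

section
/- Let M and N be tagged edges of P_{np}. Then there is an elementary move M ↦ N if and only if there is an elementary move τN ↦ M. -/
/-- A candidate tagged edge of the punctured polygon with `N` boundary vertices:
a start `a`, an end `b` (vertices modelled by `ZMod N`) and a tag `ε`. -/
structure TaggedEdge (N : ℕ) where
  a : ZMod N
  b : ZMod N
  ε : ℤ

/-- `|δ_{a,b}|`, the number of vertices on the counterclockwise boundary path
from `a` to `b` (equal to `((b - a) mod N) + 1` if `a ≠ b`, and `N + 1` if `a = b`). -/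
def deltaLen {N : ℕ} (a b : ZMod N) : ℕ :=
  if a = b then N + 1 else (b - a).val + 1

/-- The set `𝔈` of tagged edges of `P_N` (with parameter `n`): triples `M_{a,b}^ε`
with `|δ_{a,b}| ≥ N − n + 3`, `ε ∈ {1, −1}` and `ε = 1` whenever `a ≠ b`. -/
def Edges (n N : ℕ) : Set (TaggedEdge N) :=
  {M | N - n + 3 ≤ deltaLen M.a M.b ∧ (M.ε = 1 ∨ M.ε = -1) ∧ (M.a ≠ M.b → M.ε = 1)}

/-- The translation `τ` on tagged edges: `τ M_{a,b} = M_{a−1,b−1}` for `a ≠ b`,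
and `τ M_{a,a}^ε = M_{a−1,a−1}^{−ε}`. -/
def tr {N : ℕ} (M : TaggedEdge N) : TaggedEdge N :=
  if M.a = M.b then ⟨M.a - 1, M.b - 1, -M.ε⟩ else ⟨M.a - 1, M.b - 1, M.ε⟩

/-- Elementary moves between tagged edges of `P_N` (with parameter `n`). -/
def ElemMove (n N : ℕ) (M M' : TaggedEdge N) : Prop :=
  (deltaLen M.a M.b = N - n + 3 ∧ M' = ⟨M.a, M.b + 1, 1⟩) ∨
  (N - n + 4 ≤ deltaLen M.a M.b ∧ deltaLen M.a M.b ≤ N - 1 ∧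
    (M' = ⟨M.a + 1, M.b, 1⟩ ∨ M' = ⟨M.a, M.b + 1, 1⟩)) ∨
  (deltaLen M.a M.b = N ∧
    (M' = ⟨M.a + 1, M.b, 1⟩ ∨ M' = ⟨M.a, M.a, 1⟩ ∨ M' = ⟨M.a, M.a, -1⟩)) ∨
  (M.a = M.b ∧ M' = ⟨M.a + 1, M.a, 1⟩)

theorem deltaLen_add_right {N : ℕ} (a b c : ZMod N) :
    deltaLen (a + c) (b + c) = deltaLen a b := by
  simp [deltaLen]

theorem deltaLen_sub_right {N : ℕ} (a b c : ZMod N) :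
    deltaLen (a - c) (b - c) = deltaLen a b := by
  simp [deltaLen]

theorem deltaLen_le {N : ℕ} [NeZero N] (a b : ZMod N) : deltaLen a b ≤ N + 1 := by
  unfold deltaLen
  split_ifs
  · exact le_rfl
  · have := ZMod.val_lt (b - a)
    omega

theorem deltaLen_eq_succ_iff {N : ℕ} [NeZero N] {a b : ZMod N} :
    deltaLen a b = N + 1 ↔ a = b := by
  unfold deltaLen
  split_ifs with h
  · simp [h]
  · have := ZMod.val_lt (b - a)
    simp only [h, iff_false]
    omega

theorem deltaLen_self_add_one {N : ℕ} (hN : 2 ≤ N) (a : ZMod N) : deltaLen a (a + 1) = 2 := by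
  have : Fact (1 < N) := ⟨hN⟩
  simp [deltaLen, ZMod.val_one]

theorem deltaLen_add_one_right {N : ℕ} (hN : 2 ≤ N) {a b : ZMod N} (hab : a ≠ b) :
    deltaLen a (b + 1) = deltaLen a b + 1 := by
  have : Fact (1 < N) := ⟨hN⟩
  have : NeZero N := ⟨by omega⟩
  have hlt := ZMod.val_lt (b - a)
  have hsub : b + 1 - a = (b - a) + 1 := by ring
  have hval : (b + 1 - a).val = ((b - a).val + 1) % N := by
    rw [hsub, ZMod.val_add, ZMod.val_one]
  by_cases h : a = b + 1
  · have hzero : (b + 1 - a).val = 0 := by simp [h]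
    have hdvd : N ∣ (b - a).val + 1 := Nat.dvd_of_mod_eq_zero (hval ▸ hzero)
    have hle := Nat.le_of_dvd (by omega) hdvd
    simp only [deltaLen, if_pos h, if_neg hab]
    omega
  · have hne : (b + 1 - a).val ≠ 0 := by
      rw [Ne, ZMod.val_eq_zero, sub_eq_zero]
      exact fun h' => h h'.symm
    have hlt' : (b - a).val + 1 < N := by
      by_contra hge
      have heq : (b - a).val + 1 = N := by omega
      exact hne (by rw [hval, heq, Nat.mod_self])
    simp only [deltaLen, if_neg h, if_neg hab, hval, Nat.mod_eq_of_lt hlt']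

theorem deltaLen_add_one_left {N : ℕ} (hN : 2 ≤ N) {a b : ZMod N} (hab : a + 1 ≠ b) :
    deltaLen a b = deltaLen (a + 1) b + 1 := by
  rw [← deltaLen_add_one_right hN hab, deltaLen_add_right]

theorem deltaLen_eq_iff {N : ℕ} (hN : 2 ≤ N) {a b : ZMod N} :
    deltaLen a b = N ↔ a = b + 1 := by
  have : NeZero N := ⟨by omega⟩
  rw [← deltaLen_eq_succ_iff]
  by_cases hab : a = b
  · subst hab
    rw [deltaLen_self_add_one hN, deltaLen_eq_succ_iff.2 rfl]
    omega
  · rw [deltaLen_add_one_right hN hab]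
    omega

theorem tr_a {N : ℕ} (M : TaggedEdge N) : (tr M).a = M.a - 1 := by
  unfold tr
  split_ifs <;> rfl

theorem tr_b {N : ℕ} (M : TaggedEdge N) : (tr M).b = M.b - 1 := by
  unfold tr
  split_ifs <;> rfl

theorem tr_mem_edges {n N : ℕ} {M : TaggedEdge N} (hM : M ∈ Edges n N) : tr M ∈ Edges n N := by
  obtain ⟨hlen, htag, hone⟩ := hM
  refine ⟨by rwa [tr_a, tr_b, deltaLen_sub_right], ?_, ?_⟩
  · unfold tr
    split_ifs
    · rcases htag with h | h <;> simp [h]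
    · exact htag
  · intro hne
    rw [tr_a, tr_b, Ne, sub_left_inj] at hne
    simpa [tr, hne] using hone hne

/-- Between tagged edges, an elementary move is the same thing as moving exactly one of the two
endpoints one step counterclockwise. -/
theorem elemMove_iff_of_mem_edges {n N : ℕ} (hn : 3 ≤ n) (hN : n ≤ N) {M M' : TaggedEdge N}
    (hM : M ∈ Edges n N) (hM' : M' ∈ Edges n N) :
    ElemMove n N M M' ↔
      (M'.a = M.a + 1 ∧ M'.b = M.b) ∨ (M'.a = M.a ∧ M'.b = M.b + 1) := by
  have hN2 : 2 ≤ N := by omega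
  have : NeZero N := ⟨by omega⟩
  obtain ⟨a, b, ε⟩ := M
  obtain ⟨a', b', ε'⟩ := M'
  obtain ⟨hlen, -, -⟩ := hM
  obtain ⟨hlen', htag', hone'⟩ := hM'
  have hle := deltaLen_le a b
  simp only [ElemMove, TaggedEdge.mk.injEq] at *
  constructor
  · rintro (⟨-, rfl, rfl, -⟩ | ⟨-, -, ⟨rfl, rfl, -⟩ | ⟨rfl, rfl, -⟩⟩ |
      ⟨h, ⟨rfl, rfl, -⟩ | ⟨rfl, rfl, -⟩ | ⟨rfl, rfl, -⟩⟩ | ⟨rfl, rfl, rfl, -⟩)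
    all_goals first
      | exact Or.inl ⟨rfl, rfl⟩
      | exact Or.inr ⟨rfl, rfl⟩
      | exact Or.inr ⟨rfl, (deltaLen_eq_iff hN2).1 h⟩
  · rintro (⟨rfl, rfl⟩ | ⟨rfl, rfl⟩)
    · have hne : a + 1 ≠ b' := by
        rintro rfl
        rw [deltaLen_self_add_one hN2] at hlen
        omega
      have hstep := deltaLen_add_one_left hN2 hne
      have hε := hone' hne
      by_cases hab : a = b'
      · exact Or.inr (Or.inr (Or.inr ⟨hab, rfl, hab.symm, hε⟩))
      · have hlt := mt deltaLen_eq_succ_iff.1 hab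
        by_cases h : deltaLen a b' = N
        · exact Or.inr (Or.inr (Or.inl ⟨h, Or.inl ⟨rfl, rfl, hε⟩⟩))
        · exact Or.inr (Or.inl ⟨by omega, by omega, Or.inl ⟨rfl, rfl, hε⟩⟩)
    · have hne : a' ≠ b := by
        rintro rfl
        rw [deltaLen_self_add_one hN2] at hlen'
        omega
      have hlt := mt deltaLen_eq_succ_iff.1 hne
      by_cases h : deltaLen a' b = N
      · have hab := (deltaLen_eq_iff hN2).1 h
        refine Or.inr (Or.inr (Or.inl ⟨h, Or.inr ?_⟩))
        exact htag'.imp (fun hε => ⟨rfl, hab.symm, hε⟩) (fun hε => ⟨rfl, hab.symm, hε⟩)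
      · have hε := hone' fun hab => h ((deltaLen_eq_iff hN2).2 hab)
        by_cases hmin : deltaLen a' b = N - n + 3
        · exact Or.inl ⟨hmin, rfl, rfl, hε⟩
        · exact Or.inr (Or.inl ⟨by omega, by omega, Or.inr ⟨rfl, rfl, hε⟩⟩)

/-- For tagged edges `M`, `N` of `P_{np}`, there is an elementary move `M ↦ N`
if and only if there is an elementary move `τN ↦ M`. -/
theorem elemMove_iff_elemMove_tr (n p : ℕ) (hn : 3 ≤ n) (hp : 1 ≤ p) :
    ∀ M ∈ Edges n (n * p), ∀ N ∈ Edges n (n * p),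
      (ElemMove n (n * p) M N ↔ ElemMove n (n * p) (tr N) M) := by
  intro M hM N hN
  have hnp : n ≤ n * p := Nat.le_mul_of_pos_right n hp
  rw [elemMove_iff_of_mem_edges hn hnp hM hN,
    elemMove_iff_of_mem_edges hn hnp (tr_mem_edges hN) hM, tr_a, tr_b,
    sub_add_cancel, sub_add_cancel, eq_sub_iff_add_eq, eq_sub_iff_add_eq,
    @eq_comm _ N.a, @eq_comm _ N.b, @eq_comm _ N.a, @eq_comm _ N.b, or_comm]
end

section
/- The pair (Γ_{n,p}, τ_{n,p}) is a stable translation quiver: τ_{n,p} is a bijection of the vertex set of Γ_{n,p}, and for all vertices x, y the number of arrows x → y in Γ_{n,p} equals the number of arrows τ_{n,p}(y) → x. -/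
/-- Vertices of the translation quiver `Γ` with columns indexed by `ZMod N` and
levels `{0, 0̄, 1, …, m−2}`: the level `0` is `Sum.inl false`, the level `0̄` is
`Sum.inl true`, and the level `j ∈ {1, …, m−2}` is `Sum.inr k` with `k = j − 1`. -/
abbrev GammaV (N m : ℕ) := ZMod N × (Bool ⊕ Fin (m - 2))

/-- The arrows of the quiver `Γ`: `(i,1)→(i,0)`, `(i,1)→(i,0̄)`, `(i,j)→(i,j−1)` for
`2 ≤ j ≤ m−2`, `(i,0)→(i+1,1)`, `(i,0̄)→(i+1,1)`, `(i,j−1)→(i+1,j)` for `2 ≤ j ≤ m−2`. -/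
def GammaArrow (N m : ℕ) : GammaV N m → GammaV N m → Prop
  | (i, .inr j), (i', .inl _) => i' = i ∧ (j : ℕ) = 0
  | (i, .inr j), (i', .inr j') =>
      (i' = i ∧ (j' : ℕ) + 1 = (j : ℕ)) ∨ (i' = i + 1 ∧ (j : ℕ) + 1 = (j' : ℕ))
  | (i, .inl _), (i', .inr j') => i' = i + 1 ∧ (j' : ℕ) = 0
  | (_, .inl _), (_, .inl _) => False

/-- The translation `τ(i,j) = (i−1,j)`, with the `0`/`0̄` switch at `i = 0` when `N` is odd. -/
def GammaTau (N m : ℕ) : GammaV N m → GammaV N m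
  | (i, .inl e) => if Odd N ∧ i = 0 then (i - 1, .inl (!e)) else (i - 1, .inl e)
  | (i, .inr j) => (i - 1, .inr j)

theorem gammaTau_inl (N m : ℕ) (i : ZMod N) (e : Bool) :
    GammaTau N m (i, .inl e) = (i - 1, .inl (if Odd N ∧ i = 0 then !e else e)) := by
  simp only [GammaTau]
  split_ifs <;> rfl

theorem gammaTau_inr (N m : ℕ) (i : ZMod N) (j : Fin (m - 2)) :
    GammaTau N m (i, .inr j) = (i - 1, .inr j) := rfl

theorem gammaTau_bijective (N m : ℕ) : Function.Bijective (GammaTau N m) := by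
  constructor
  · rintro ⟨i, e | j⟩ ⟨i', e' | j'⟩ h
    · simp only [gammaTau_inl, Prod.mk.injEq, sub_left_inj, Sum.inl.injEq] at h
      obtain ⟨rfl, h⟩ := h
      split_ifs at h <;> simp_all
    · simp [gammaTau_inl, gammaTau_inr] at h
    · simp [gammaTau_inl, gammaTau_inr] at h
    · simpa [gammaTau_inr] using h
  · rintro ⟨i, e | j⟩
    · refine ⟨(i + 1, .inl (if Odd N ∧ i + 1 = 0 then !e else e)), ?_⟩
      rw [gammaTau_inl]
      split_ifs <;> simp
    · exact ⟨(i + 1, .inr j), by simp [gammaTau_inr]⟩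

theorem gammaArrow_iff_gammaArrow_gammaTau (N m : ℕ) (x y : GammaV N m) :
    GammaArrow N m x y ↔ GammaArrow N m (GammaTau N m y) x := by
  obtain ⟨i, e | j⟩ := x <;> obtain ⟨i', e' | j'⟩ := y
  · simp [gammaTau_inl, GammaArrow]
  · simp only [gammaTau_inr, GammaArrow, eq_sub_iff_add_eq, eq_comm]
  · simp only [gammaTau_inl, GammaArrow, sub_add_cancel, eq_comm]
  · simp only [gammaTau_inr, GammaArrow, sub_add_cancel, eq_sub_iff_add_eq]
    rw [or_comm, eq_comm (a := i'), eq_comm (a := i')]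

/-- `(Γ_{n,p}, τ_{n,p})` is a stable translation quiver: `τ_{n,p}` is a bijection of the
vertex set, and the number of arrows `x → y` (here `0` or `1`) equals the number of
arrows `τ_{n,p}(y) → x`. -/
theorem gamma_np_stable_translation_quiver (n p : ℕ) (hn : 3 ≤ n) (hp : 1 ≤ p) :
    Function.Bijective (GammaTau (n * p) n) ∧
      ∀ x y : GammaV (n * p) n,
        (GammaArrow (n * p) n x y ↔ GammaArrow (n * p) n (GammaTau (n * p) n y) x) := by
  exact ⟨gammaTau_bijective _ _, gammaArrow_iff_gammaArrow_gammaTau _ _⟩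
end

section
/- The map φ_p intertwines the translations: for every vertex (i,j) of Γ_{n,p}, φ_p(τ_{n,p}(i,j)) = τ(φ_p(i,j)), where τ_{n,p} is the translation of Γ_{n,p} and τ is the translation on tagged edges of P_{np}. -/
/-- The map `φ_p` from the vertices of `Γ_{n,p}` to tagged edges of `P_{np}`:
`φ_p(i,j) = M_{i+1, i+np+1−j}` for `j ∉ {0,0̄}` (here the level `j = k+1` is coded
by `Sum.inr k`), and `φ_p(i,j) = M_{i+1,i+1}^{±1}` for `j ∈ {0,0̄}`, the tag being `+1`
exactly when (`j = 0` and `i` is even) or (`j = 0̄` and `i` is odd). -/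
def phi (n p : ℕ) : GammaV (n * p) n → TaggedEdge (n * p)
  | (i, .inr k) => ⟨i + 1, i + ((n * p + 1 - ((k : ℕ) + 1) : ℕ) : ZMod (n * p)), 1⟩
  | (i, .inl e) => ⟨i + 1, i + 1, if (e = false ↔ Even i.val) then 1 else -1⟩

/-- Subtracting `1` in `ZMod N` switches the parity of the representative in `{0, …, N - 1}`,
except at `0` when `N` is odd. -/
theorem ZMod.even_val_sub_one_iff {N : ℕ} (hN : 1 < N) (i : ZMod N) :
    Even (i - 1).val ↔ if Odd N ∧ i = 0 then Even i.val else ¬ Even i.val := by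
  have : NeZero N := ⟨by omega⟩
  have : Fact (1 < N) := ⟨hN⟩
  by_cases hi : i = 0
  · subst hi
    obtain ⟨M, rfl⟩ : ∃ M, N = M + 1 := ⟨N - 1, by omega⟩
    rw [zero_sub, ZMod.val_neg_one]
    simp [Nat.odd_add_one]
  · have hpos : 1 ≤ i.val := Nat.one_le_iff_ne_zero.mpr ((ZMod.val_ne_zero i).mpr hi)
    have hval : (i - 1).val = i.val - 1 := by
      rw [ZMod.val_sub (by rwa [ZMod.val_one]), ZMod.val_one]
    rw [hval, if_neg (fun h => hi h.2), Nat.even_sub hpos]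
    simp

/-- The endpoints of `φ_p(i, j)` are distinct for levels `j ∉ {0, 0̄}`. -/
theorem add_one_ne_add_natCast_sub {N k : ℕ} (hk : k + 1 < N) (i : ZMod N) :
    i + 1 ≠ i + ((N + 1 - (k + 1) : ℕ) : ZMod N) := by
  intro h
  have hcast : ((k + 1 : ℕ) : ZMod N) = 0 := by
    have h' := add_left_cancel h
    rw [Nat.cast_sub (by omega)] at h'
    push_cast at h' ⊢
    rw [ZMod.natCast_self] at h'
    linear_combination h'
  exact absurd (Nat.le_of_dvd k.succ_pos ((ZMod.natCast_eq_zero_iff _ _).mp hcast)) (by omega)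

/-- The map `φ_p` intertwines the translations: `φ_p ∘ τ_{n,p} = τ ∘ φ_p`. -/
theorem phi_comm_tau (n p : ℕ) (hn : 3 ≤ n) (hp : 1 ≤ p) :
    ∀ x : GammaV (n * p) n, phi n p (GammaTau (n * p) n x) = tr (phi n p x) := by
  have hnp : n ≤ n * p := Nat.le_mul_of_pos_right n hp
  rintro ⟨i, e | k⟩
  · have hpar := ZMod.even_val_sub_one_iff (by omega) i
    by_cases h : Odd (n * p) ∧ i = 0
    · rw [if_pos h] at hpar
      obtain ⟨hodd, rfl⟩ := h
      rw [zero_sub] at hpar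
      cases e <;> simp [GammaTau, phi, tr, hodd, hpar]
    · rw [if_neg h] at hpar
      by_cases hev : Even i.val <;> cases e <;> simp [GammaTau, phi, tr, h, hpar, hev]
  · have hk := add_one_ne_add_natCast_sub (N := n * p) (k := k) (by omega) i
    have hne : (phi n p (i, .inr k)).a ≠ (phi n p (i, .inr k)).b := hk
    rw [tr, if_neg hne]
    simp only [GammaTau, phi, TaggedEdge.mk.injEq, and_true]
    constructor <;> ring
end

section
/- For all vertices (i,j), (i′,j′) of Γ_{n,p}, there is an arrow (i,j) → (i′,j′) in Γ_{n,p} if and only if there is an elementary move φ_p(i,j) ↦ φ_p(i′,j′) between the corresponding tagged edges of P_{np}. -/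
/-- Small naturals are equal in `ZMod N` only if they are equal. -/
theorem ZMod.natCast_inj_of_lt {N a b : ℕ} (ha : a < N) (hb : b < N) :
    (a : ZMod N) = b ↔ a = b := by
  rw [ZMod.natCast_eq_natCast_iff', Nat.mod_eq_of_lt ha, Nat.mod_eq_of_lt hb]

theorem ZMod.natCast_ne_zero_of_lt {N a : ℕ} (h0 : 0 < a) (ha : a < N) : (a : ZMod N) ≠ 0 := by
  have h := ZMod.natCast_inj_of_lt ha (h0.trans ha)
  rw [Nat.cast_zero] at h
  exact fun h' => h0.ne' (h.1 h')

theorem deltaLen_self {N : ℕ} (a : ZMod N) : deltaLen a a = N + 1 := if_pos rfl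

theorem deltaLen_add_one_sub {N k : ℕ} (hk : k + 1 < N) (i : ZMod N) :
    deltaLen (i + 1) (i - (k : ZMod N)) = N - k := by
  have hne : ((k + 1 : ℕ) : ZMod N) ≠ 0 := ZMod.natCast_ne_zero_of_lt k.succ_pos hk
  have hab : i + 1 ≠ i - (k : ZMod N) := fun h => hne (by push_cast; linear_combination h)
  have hsub : i - (k : ZMod N) - (i + 1) = ((N - (k + 1) : ℕ) : ZMod N) := by
    rw [Nat.cast_sub hk.le, ZMod.natCast_self]
    push_cast
    ring
  rw [deltaLen, if_neg hab, hsub, ZMod.val_natCast, Nat.mod_eq_of_lt (by omega)]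
  omega

theorem phi_inr (n p : ℕ) (i : ZMod (n * p)) (k : Fin (n - 2)) (hk : (k : ℕ) < n * p) :
    phi n p (i, .inr k) = ⟨i + 1, i - (k : ℕ), 1⟩ := by
  have h : ((n * p + 1 - ((k : ℕ) + 1) : ℕ) : ZMod (n * p)) = -((k : ℕ) : ZMod (n * p)) := by
    rw [Nat.add_sub_add_right, Nat.cast_sub hk.le, ZMod.natCast_self, zero_sub]
  simp only [phi, h, sub_eq_add_neg]

/-- There is an arrow `(i,j) → (i′,j′)` in `Γ_{n,p}` if and only if there is an
elementary move `φ_p(i,j) ↦ φ_p(i′,j′)` between the corresponding tagged edges of `P_{np}`. -/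
theorem phi_arrow_iff_elemMove (n p : ℕ) (hn : 3 ≤ n) (hp : 1 ≤ p) :
    ∀ x y : GammaV (n * p) n,
      (GammaArrow (n * p) n x y ↔ ElemMove n (n * p) (phi n p x) (phi n p y)) := by
  have hN : n ≤ n * p := Nat.le_mul_of_pos_right n hp
  have ne_zero : ∀ m : ℕ, 0 < m → m < n → (m : ZMod (n * p)) ≠ 0 := fun m h0 hm =>
    ZMod.natCast_ne_zero_of_lt h0 (hm.trans_le hN)
  have cast_inj : ∀ a b : ℕ, a < n → b < n → (a : ZMod (n * p)) = b → a = b :=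
    fun a b ha hb => (ZMod.natCast_inj_of_lt (ha.trans_le hN) (hb.trans_le hN)).1
  have h1 : (1 : ZMod (n * p)) ≠ 0 := by simpa using ne_zero 1 one_pos (by omega)
  rintro ⟨i, e | k⟩ ⟨i', e' | k'⟩
  · simp only [GammaArrow, ElemMove, phi, deltaLen_self, TaggedEdge.mk.injEq, false_iff]
    rintro (⟨h, -⟩ | ⟨-, h, -⟩ | ⟨h, -⟩ | ⟨-, ha, hb, -⟩)
    · omega
    · omega
    · omega
    · exact h1 (by linear_combination hb - ha)
  · have hk' := k'.isLt
    rw [phi_inr n p i' k' (by omega)]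
    simp only [GammaArrow, ElemMove, phi, deltaLen_self, TaggedEdge.mk.injEq]
    constructor
    · rintro ⟨rfl, h⟩
      simp [h]
    · rintro (⟨h, -⟩ | ⟨-, h, -⟩ | ⟨h, -⟩ | ⟨-, ha, hb, -⟩)
      · omega
      · omega
      · omega
      · refine ⟨by linear_combination ha, cast_inj _ 0 (by omega) (by omega) ?_⟩
        push_cast
        linear_combination ha - hb
  · have hk := k.isLt
    rw [phi_inr n p i k (by omega)]
    simp only [GammaArrow, ElemMove, phi, deltaLen_add_one_sub (N := n * p) (k := k) (by omega) i,
      TaggedEdge.mk.injEq]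
    have h2 := ne_zero (k + 2) (by omega) (by omega)
    have hab := ne_zero (k + 1) (by omega) (by omega)
    push_cast at h2 hab
    have next_b : ∀ {c : Prop}, i' + 1 = i + 1 ∧ i' + 1 = i - (k : ℕ) + 1 ∧ c →
        i' = i ∧ (k : ℕ) = 0 := by
      rintro c ⟨ha, hb, -⟩
      refine ⟨by linear_combination ha, cast_inj _ 0 (by omega) (by omega) ?_⟩
      push_cast
      linear_combination hb - ha
    have next_a : ∀ {c : Prop}, ¬ (i' + 1 = i + 1 + 1 ∧ i' + 1 = i - (k : ℕ) ∧ c) := by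
      rintro c ⟨ha, hb, -⟩
      exact h2 (by linear_combination hb - ha)
    constructor
    · rintro ⟨rfl, h⟩
      refine Or.inr (Or.inr (Or.inl ⟨by omega, Or.inr ?_⟩))
      split_ifs <;> simp
    · rintro (⟨-, h⟩ | ⟨-, -, h | h⟩ | ⟨hd, h⟩ | ⟨h, -⟩)
      · exact next_b h
      · exact (next_a h).elim
      · exact next_b h
      · rcases h with h | ⟨ha, -⟩ | ⟨ha, -⟩
        · exact (next_a h).elim
        · exact ⟨by linear_combination ha, by omega⟩
        · exact ⟨by linear_combination ha, by omega⟩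
      · exact (hab (by linear_combination h)).elim
  · have hk := k.isLt
    have hk' := k'.isLt
    rw [phi_inr n p i k (by omega), phi_inr n p i' k' (by omega)]
    simp only [GammaArrow, ElemMove, deltaLen_add_one_sub (N := n * p) (k := k) (by omega) i,
      TaggedEdge.mk.injEq]
    have hab := ne_zero (k + 1) (by omega) (by omega)
    have hab' := ne_zero (k' + 1) (by omega) (by omega)
    push_cast at hab hab'
    have next_b : i' + 1 = i + 1 ∧ i' - (k' : ℕ) = i - (k : ℕ) + 1 ↔
        i' = i ∧ (k' : ℕ) + 1 = k := by
      constructor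
      · rintro ⟨ha, hb⟩
        refine ⟨by linear_combination ha, cast_inj _ _ (by omega) (by omega) ?_⟩
        push_cast
        linear_combination ha - hb
      · rintro ⟨rfl, h⟩
        rw [← h]
        exact ⟨rfl, by push_cast; ring⟩
    have next_a : i' + 1 = i + 1 + 1 ∧ i' - (k' : ℕ) = i - (k : ℕ) ↔
        i' = i + 1 ∧ (k : ℕ) + 1 = k' := by
      constructor
      · rintro ⟨ha, hb⟩
        refine ⟨by linear_combination ha, cast_inj _ _ (by omega) (by omega) ?_⟩
        push_cast
        linear_combination hb - ha
      · rintro ⟨rfl, h⟩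
        rw [← h]
        exact ⟨rfl, by push_cast; ring⟩
    have no_loop : ¬ (i' + 1 = i + 1 ∧ i' - (k' : ℕ) = i + 1) := by
      rintro ⟨ha, hb⟩
      exact hab' (by linear_combination ha - hb)
    have hne : i + 1 ≠ i - (k : ℕ) := fun h => hab (by linear_combination h)
    have htag : (1 : ℤ) ≠ -1 := by decide
    simp only [and_true, htag, and_false, next_b, next_a, no_loop, hne, false_and, or_false]
    constructor
    · rintro (⟨hi, h⟩ | ⟨hi, h⟩)
      · by_cases hmin : (k : ℕ) + 3 = n
        · exact Or.inl ⟨by omega, hi, h⟩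
        · exact Or.inr (Or.inl ⟨by omega, by omega, Or.inr ⟨hi, h⟩⟩)
      · by_cases hmax : (k : ℕ) = 0
        · exact Or.inr (Or.inr ⟨by omega, hi, h⟩)
        · exact Or.inr (Or.inl ⟨by omega, by omega, Or.inl ⟨hi, h⟩⟩)
    · rintro (⟨-, h⟩ | ⟨-, -, h | h⟩ | ⟨-, h⟩)
      exacts [Or.inl h, Or.inr h, Or.inl h, Or.inr h]
end

section
/- The map μ_p is well defined (i.e. for every tagged edge M_{a,b}^ε of P_{np}, the triple M_{ā,b̄}^ε is a tagged edge of P_n) and is a surjection from 𝔈_{np} onto 𝔈_n in which every tagged edge of P_n has exactly p preimages. -/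
/-- The map `μ_p` from tagged edges of `P_{np}` to tagged edges of `P_n`,
reducing both endpoints modulo `n` and keeping the tag. -/
def mu (n p : ℕ) (M : TaggedEdge (n * p)) : TaggedEdge n :=
  ⟨ZMod.castHom (dvd_mul_right n p) (ZMod n) M.a,
   ZMod.castHom (dvd_mul_right n p) (ZMod n) M.b, M.ε⟩

/-- The length of the boundary path from `a` to `b`, complemented by the gap from `b` to `a`. -/
lemma deltaLen_add_val_sub {N : ℕ} [NeZero N] (a b : ZMod N) :
    deltaLen a b + (a - b).val = N + 1 := by
  unfold deltaLen
  split_ifs with h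
  · simp [h]
  · have hne : b - a ≠ 0 := sub_ne_zero.mpr (Ne.symm h)
    have : NeZero (b - a) := ⟨hne⟩
    have hval := ZMod.val_neg_of_ne_zero (b - a)
    rw [neg_sub] at hval
    have := ZMod.val_lt (b - a)
    omega

lemma mem_Edges_iff {n N : ℕ} [NeZero N] (h : n ≤ N) (M : TaggedEdge N) :
    M ∈ Edges n N ↔
      (M.a - M.b).val + 2 ≤ n ∧ (M.ε = 1 ∨ M.ε = -1) ∧ ((M.a - M.b).val ≠ 0 → M.ε = 1) := by
  have hlen := deltaLen_add_val_sub M.a M.b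
  have hlt := ZMod.val_lt (M.a - M.b)
  have hzero : M.a ≠ M.b ↔ (M.a - M.b).val ≠ 0 := by
    rw [Ne, Ne, ZMod.val_eq_zero, sub_eq_zero]
  simp only [Edges, Set.mem_ofPred_eq, hzero]
  refine and_congr_left fun _ => ?_
  omega

lemma ZMod.val_castHom_eq_mod {n N : ℕ} [NeZero N] (h : n ∣ N) (x : ZMod N) :
    (ZMod.castHom h (ZMod n) x).val = x.val % n := by
  rw [ZMod.castHom_apply, ZMod.cast_eq_val, ZMod.val_natCast]

/-- The lift of `M'` whose start is the `i`-th lift of the start of `M'`, with the same gap from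
end to start. -/
def TaggedEdge.lift {n : ℕ} (p : ℕ) (M' : TaggedEdge n) (i : ℕ) : TaggedEdge (n * p) :=
  ⟨((M'.a.val + n * i : ℕ) : ZMod (n * p)),
   ((M'.a.val + n * i : ℕ) : ZMod (n * p)) - ((M'.a - M'.b).val : ZMod (n * p)), M'.ε⟩

lemma mu_lift {n : ℕ} [NeZero n] (p : ℕ) (M' : TaggedEdge n) (i : ℕ) :
    mu n p (M'.lift p i) = M' := by
  simp only [mu, TaggedEdge.lift, map_sub, map_add, map_mul, map_natCast, ZMod.natCast_zmod_val,
    Nat.cast_add, Nat.cast_mul, ZMod.natCast_self, zero_mul, add_zero, sub_sub_cancel]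

lemma lift_mem_Edges {n p : ℕ} [NeZero n] [NeZero p] {M' : TaggedEdge n} (hM' : M' ∈ Edges n n)
    (i : ℕ) : M'.lift p i ∈ Edges n (n * p) := by
  have hle : n ≤ n * p := Nat.le_mul_of_pos_right n (NeZero.pos p)
  rw [mem_Edges_iff le_rfl] at hM'
  rw [mem_Edges_iff hle]
  have hval : ((M'.lift p i).a - (M'.lift p i).b).val = (M'.a - M'.b).val := by
    simp only [TaggedEdge.lift, sub_sub_cancel]
    exact ZMod.val_natCast_of_lt ((ZMod.val_lt _).trans_le hle)
  rwa [hval]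

lemma lift_injOn {n : ℕ} [NeZero n] (p : ℕ) (M' : TaggedEdge n) :
    Set.InjOn (M'.lift p) (Set.Iio p) := by
  have hlt : ∀ k < p, M'.a.val + n * k < n * p := fun k hk => by
    have := ZMod.val_lt M'.a
    have := Nat.mul_le_mul_left n (Nat.succ_le_of_lt hk)
    rw [Nat.mul_succ] at this
    omega
  intro i hi j hj hij
  have h := congrArg (fun M => M.a.val) hij
  simp only [TaggedEdge.lift] at h
  rw [ZMod.val_natCast_of_lt (hlt i hi), ZMod.val_natCast_of_lt (hlt j hj)] at h
  exact Nat.eq_of_mul_eq_mul_left (NeZero.pos n) (by omega)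

lemma val_sub_mu_and_mu_mem_Edges {n p : ℕ} [NeZero n] [NeZero p] {M : TaggedEdge (n * p)}
    (hM : M ∈ Edges n (n * p)) :
    ((mu n p M).a - (mu n p M).b).val = (M.a - M.b).val ∧ mu n p M ∈ Edges n n := by
  rw [mem_Edges_iff (Nat.le_mul_of_pos_right n (NeZero.pos p))] at hM
  have hval : ((mu n p M).a - (mu n p M).b).val = (M.a - M.b).val := by
    simp only [mu]
    rw [← map_sub, ZMod.val_castHom_eq_mod, Nat.mod_eq_of_lt (by omega)]
  refine ⟨hval, ?_⟩
  rw [mem_Edges_iff le_rfl, hval]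
  exact hM

lemma eq_lift_mu {n p : ℕ} [NeZero n] [NeZero p] {M : TaggedEdge (n * p)}
    (hM : M ∈ Edges n (n * p)) : (mu n p M).lift p (M.a.val / n) = M := by
  have ha : (((mu n p M).a.val + n * (M.a.val / n) : ℕ) : ZMod (n * p)) = M.a := by
    simp only [mu]
    rw [ZMod.val_castHom_eq_mod, Nat.mod_add_div, ZMod.natCast_zmod_val]
  unfold TaggedEdge.lift
  rw [ha, (val_sub_mu_and_mu_mem_Edges hM).1, ZMod.natCast_zmod_val, sub_sub_cancel]
  rfl

lemma fiber_eq_image_lift {n p : ℕ} [NeZero n] [NeZero p] {M' : TaggedEdge n}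
    (hM' : M' ∈ Edges n n) :
    {M ∈ Edges n (n * p) | mu n p M = M'} = M'.lift p '' Set.Iio p := by
  refine Set.Subset.antisymm ?_ ?_
  · rintro M ⟨hM, rfl⟩
    exact ⟨M.a.val / n, Nat.div_lt_of_lt_mul (ZMod.val_lt M.a), eq_lift_mu hM⟩
  · rintro _ ⟨i, -, rfl⟩
    exact ⟨lift_mem_Edges hM' i, mu_lift _ _ _⟩

/-- The map `μ_p` is well defined (it sends tagged edges of `P_{np}` to tagged edges of
`P_n`) and is a surjection from `𝔈_{np}` onto `𝔈_n` in which every tagged edge of `P_n`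
has exactly `p` preimages. -/
theorem mu_welldefined_surjective_fibers (n p : ℕ) (hn : 3 ≤ n) (hp : 1 ≤ p) :
    (∀ M ∈ Edges n (n * p), mu n p M ∈ Edges n n) ∧
    Set.SurjOn (mu n p) (Edges n (n * p)) (Edges n n) ∧
    (∀ M' ∈ Edges n n, {M ∈ Edges n (n * p) | mu n p M = M'}.ncard = p) := by
  have : NeZero n := ⟨by omega⟩
  have : NeZero p := ⟨by omega⟩
  refine ⟨fun M hM => (val_sub_mu_and_mu_mem_Edges hM).2,
    fun M' hM' => ⟨M'.lift p 0, lift_mem_Edges hM' 0, mu_lift p M' 0⟩, fun M' hM' => ?_⟩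
  rw [fiber_eq_image_lift hM', (lift_injOn p M').ncard_image, ← Finset.coe_Iio,
    Set.ncard_coe_finset, Nat.card_Iio]
end

section
/- The map μ_p sends elementary moves to elementary moves: if M and N are tagged edges of P_{np} and there is an elementary move M ↦ N (with respect to parameters n, p), then there is an elementary move μ_p(M) ↦ μ_p(N) between tagged edges of P_n (with respect to parameters n, 1). -/
/-- Reduction modulo `n` shortens a boundary path with at least `n * p - n + 2` vertices by
exactly `n * p - n`. -/
theorem deltaLen_castHom_add {n p : ℕ} (hn : 0 < n) (hp : 0 < p) (a b : ZMod (n * p))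
    (h : n * p - n + 2 ≤ deltaLen a b) :
    deltaLen (ZMod.castHom (dvd_mul_right n p) (ZMod n) a)
      (ZMod.castHom (dvd_mul_right n p) (ZMod n) b) + (n * p - n) = deltaLen a b := by
  have hle : n ≤ n * p := Nat.le_mul_of_pos_right n hp
  by_cases hab : a = b
  · simp only [deltaLen, hab, if_true]
    omega
  · have : NeZero n := ⟨hn.ne'⟩
    have : NeZero (n * p) := ⟨(hn.trans_le hle).ne'⟩
    have hlt : (b - a).val < n * p := ZMod.val_lt _
    simp only [deltaLen, if_neg hab] at h ⊢
    have hval : (ZMod.castHom (dvd_mul_right n p) (ZMod n) b -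
        ZMod.castHom (dvd_mul_right n p) (ZMod n) a).val = (b - a).val - (n * p - n) := by
      rw [← map_sub, ZMod.castHom_apply, ZMod.cast_eq_val, ZMod.val_natCast]
      have hsub : n * p - n = n * (p - 1) := by rw [Nat.mul_sub, mul_one]
      conv_lhs => rw [← Nat.sub_add_cancel (show n * p - n ≤ (b - a).val by omega)]
      rw [hsub, Nat.add_mul_mod_self_left, ← hsub, Nat.mod_eq_of_lt (by omega)]
    have hne : ZMod.castHom (dvd_mul_right n p) (ZMod n) a ≠
        ZMod.castHom (dvd_mul_right n p) (ZMod n) b := by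
      intro heq
      rw [heq, sub_self, ZMod.val_zero] at hval
      omega
    rw [if_neg hne, hval]
    omega

/-- `μ_p` sends elementary moves to elementary moves: if `M`, `N` are tagged edges of
`P_{np}` and there is an elementary move `M ↦ N` (parameters `n`, `p`), then there is an
elementary move `μ_p(M) ↦ μ_p(N)` between tagged edges of `P_n` (parameters `n`, `1`). -/
theorem mu_elemMove (n p : ℕ) (hn : 3 ≤ n) (hp : 1 ≤ p) :
    ∀ M ∈ Edges n (n * p), ∀ N ∈ Edges n (n * p),
      ElemMove n (n * p) M N → ElemMove n n (mu n p M) (mu n p N) := by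
  rintro ⟨a, b, ε⟩ hM N - hmove
  have hle : n ≤ n * p := Nat.le_mul_of_pos_right n hp
  have hlen := deltaLen_castHom_add (by omega) hp a b (le_trans (by omega) hM.1)
  simp only [ElemMove, mu] at hmove ⊢
  rcases hmove with ⟨h, rfl⟩ | ⟨h, h', rfl | rfl⟩ | ⟨h, rfl | rfl | rfl⟩ | ⟨rfl, rfl⟩
  · exact Or.inl ⟨by omega, by simp only [map_add, map_one]⟩
  · exact Or.inr (Or.inl ⟨by omega, by omega, Or.inl (by simp only [map_add, map_one])⟩)
  · exact Or.inr (Or.inl ⟨by omega, by omega, Or.inr (by simp only [map_add, map_one])⟩)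
  · exact Or.inr (Or.inr (Or.inl ⟨by omega, Or.inl (by simp only [map_add, map_one])⟩))
  · exact Or.inr (Or.inr (Or.inl ⟨by omega, Or.inr (Or.inl rfl)⟩))
  · exact Or.inr (Or.inr (Or.inl ⟨by omega, Or.inr (Or.inr rfl)⟩))
  · exact Or.inr (Or.inr (Or.inr ⟨rfl, by simp only [map_add, map_one]⟩))
end
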